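/- (Theorem 3.5) Suppose there exist L > 0 and a non-decreasing function φ : [0,∞) → [0,∞) with φ(t)/t < 1 for all t > 0 and t ↦ φ(t)/t non-increasing on (0,∞), such that d(W_n(x,y), W_n(x',y')) ≤ L|x − x'| + φ(d(y,y')) for all (x,y), (x',y') ∈ [a,b] × Y and all n ≥ 1. Let f_* be the unique fixed point of the operator T in C([a,b]). Then for every f_0 ∈ C([a,b]), the iterates T^{[k]}(f_0) converge to f_* in the uniform metric as k → ∞. -/

import Mathlib

open Set Filter Metric

/-!
On each piece `[xₙ, xₙ₊₁]` the operator acts by `T f (lₙ₊₁ u) = Wₙ₊₁(u, f u)`, so taking both base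
points equal in the estimate on `W` gives `dist (T g z) (T h z) ≤ φ (sup dist g h)`: the operator is
a `φ`-contraction for the uniform distance (a Rakotch contraction, as `φ t / t` is non-increasing).
Applied to the distances `D k` of the iterates from the fixed point, this gives `D (k+1) ≤ φ (D k)`.
While `D` stays above `ε > 0`, monotonicity of `φ t / t` turns this into geometric decay with ratio
`φ ε / ε < 1`, so `D` eventually drops below `ε` and, being non-increasing, stays there
(`tendsto_zero_of_le_comparison`).
-/

/-- A non-negative sequence with `D (k+1) ≤ φ (D k)` tends to `0` when `φ t / t` is smaller than `1`
and non-increasing on `(0, ∞)`, and `φ` is monotone on `[0, ∞)`. -/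
theorem tendsto_zero_of_le_comparison (φ : ℝ → ℝ) (hφ0 : ∀ t : ℝ, 0 ≤ t → 0 ≤ φ t)
    (hφmono : ∀ s t : ℝ, 0 ≤ s → s ≤ t → φ s ≤ φ t)
    (hφlt : ∀ t : ℝ, 0 < t → φ t / t < 1)
    (hφanti : ∀ s t : ℝ, 0 < s → s ≤ t → φ t / t ≤ φ s / s)
    (D : ℕ → ℝ) (hD0 : ∀ k, 0 ≤ D k) (hD : ∀ k, D (k + 1) ≤ φ (D k)) :
    Tendsto D atTop (nhds 0) := by
  have hlt : ∀ t, 0 < t → φ t < t := fun t ht => (div_lt_one ht).1 (hφlt t ht)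
  -- `φ 0 ≤ φ t < t` for every `t > 0`, which forces `φ 0 = 0`.
  have hzero : φ 0 ≤ 0 := by
    refine le_of_forall_pos_le_add fun ε hε => ?_
    linarith [hφmono 0 ε le_rfl hε.le, hlt ε hε]
  have hle : ∀ t, 0 ≤ t → φ t ≤ t := by
    intro t ht
    rcases ht.eq_or_lt with rfl | h
    · exact hzero
    · exact (hlt t h).le
  have hanti : Antitone D := antitone_nat_of_succ_le fun k => (hD k).trans (hle _ (hD0 k))
  have hsmall : ∀ ε > 0, ∃ k, D k < ε := by
    intro ε hε
    by_contra! hbig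
    have hr0 : 0 ≤ φ ε / ε := div_nonneg (hφ0 ε hε.le) hε.le
    have hgeom : ∀ k, D k ≤ (φ ε / ε) ^ k * D 0 := by
      intro k
      induction k with
      | zero => simp
      | succ k ih =>
        have hpos : 0 < D k := hε.trans_le (hbig k)
        calc D (k + 1) ≤ φ (D k) := hD k
          _ = φ (D k) / D k * D k := (div_mul_cancel₀ _ hpos.ne').symm
          _ ≤ φ ε / ε * D k := mul_le_mul_of_nonneg_right (hφanti ε _ hε (hbig k)) hpos.le
          _ ≤ φ ε / ε * ((φ ε / ε) ^ k * D 0) := mul_le_mul_of_nonneg_left ih hr0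
          _ = (φ ε / ε) ^ (k + 1) * D 0 := by ring
    have hlim : Tendsto (fun k : ℕ => (φ ε / ε) ^ k * D 0) atTop (nhds 0) := by
      simpa using (tendsto_pow_atTop_nhds_zero_of_lt_one hr0 (hφlt ε hε)).mul_const (D 0)
    obtain ⟨k, hk⟩ := (hlim.eventually (gt_mem_nhds hε)).exists
    exact absurd (hbig k) (not_le.2 ((hgeom k).trans_lt hk))
  rw [Metric.tendsto_atTop]
  intro ε hε
  obtain ⟨N, hN⟩ := hsmall ε hε
  refine ⟨N, fun k hk => ?_⟩
  rw [Real.dist_eq, sub_zero, abs_of_nonneg (hD0 k)]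
  exact (hanti hk).trans_lt hN

/-- The intervals `[x n, x (n + 1)]` cover `[x 0, b)` when `x n → b`. -/
theorem exists_mem_Icc_succ (x : ℕ → ℝ) (b : ℝ) (hxb : Tendsto x atTop (nhds b))
    (z : ℝ) (hz0 : x 0 ≤ z) (hzb : z < b) : ∃ n, z ∈ Icc (x n) (x (n + 1)) := by
  classical
  have hex : ∃ n, z < x n := (hxb.eventually (lt_mem_nhds hzb)).exists
  obtain ⟨n, hn⟩ : ∃ n, Nat.find hex = n + 1 := by
    refine Nat.exists_eq_succ_of_ne_zero fun h => ?_
    have := Nat.find_spec hex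
    rw [h] at this
    exact absurd hz0 (not_le.2 this)
  refine ⟨n, not_lt.1 (Nat.find_min hex (by omega)), ?_⟩
  have := Nat.find_spec hex
  rw [hn] at this
  exact this.le

theorem iterates_converge_to_FIF
    {Y : Type*} [MetricSpace Y] [CompactSpace Y]
    (x : ℕ → ℝ) (hx : StrictMono x) (b : ℝ) (hxb : Tendsto x atTop (nhds b))
    (y : ℕ → Y) (M : Y) (hyM : Tendsto y atTop (nhds M))
    (L : ℕ → ℝ) (hL0 : ∀ n : ℕ, 0 ≤ L (n + 1)) (hL1 : ∀ n : ℕ, L (n + 1) < 1)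
    (hLsup : (⨆ n : ℕ, L (n + 1)) < 1)
    (l : ℕ → ℝ → ℝ)
    (hl_lip : ∀ n : ℕ, ∀ u ∈ Icc (x 0) b, ∀ v ∈ Icc (x 0) b,
      |l (n + 1) u - l (n + 1) v| ≤ L (n + 1) * |u - v|)
    (hl_inj : ∀ n : ℕ, InjOn (l (n + 1)) (Icc (x 0) b))
    (hl_image : ∀ n : ℕ, l (n + 1) '' Icc (x 0) b = Icc (x n) (x (n + 1)))
    (hl_a : ∀ n : ℕ, l (n + 1) (x 0) = x n) (hl_b : ∀ n : ℕ, l (n + 1) b = x (n + 1))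
    (W : ℕ → ℝ → Y → Y)
    (hW_cont : ∀ n : ℕ, ContinuousOn (fun p : ℝ × Y => W (n + 1) p.1 p.2)
      (Icc (x 0) b ×ˢ (univ : Set Y)))
    (hW_a : ∀ n : ℕ, W (n + 1) (x 0) (y 0) = y n)
    (hW_b : ∀ n : ℕ, W (n + 1) b M = y (n + 1))
    (hW_diam : Tendsto (fun n : ℕ =>
      Metric.diam ((fun p : ℝ × Y => W (n + 1) p.1 p.2) ''
        (Icc (x 0) b ×ˢ (univ : Set Y)))) atTop (nhds 0))
    (Lc : ℝ) (hLc : 0 < Lc)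
    (φ : ℝ → ℝ) (hφ0 : ∀ t : ℝ, 0 ≤ t → 0 ≤ φ t)
    (hφmono : ∀ s t : ℝ, 0 ≤ s → s ≤ t → φ s ≤ φ t)
    (hφlt : ∀ t : ℝ, 0 < t → φ t / t < 1)
    (hφanti : ∀ s t : ℝ, 0 < s → s ≤ t → φ t / t ≤ φ s / s)
    (hWφ : ∀ n : ℕ, ∀ u ∈ Icc (x 0) b, ∀ v ∈ Icc (x 0) b, ∀ p q : Y,
      dist (W (n + 1) u p) (W (n + 1) v q) ≤ Lc * |u - v| + φ (dist p q))
    (T : (ℝ → Y) → ℝ → Y)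
    (hT : ∀ f : ℝ → Y, ContinuousOn f (Icc (x 0) b) → f (x 0) = y 0 → f b = M →
      (∀ n : ℕ, ∀ u ∈ Icc (x 0) b, T f (l (n + 1) u) = W (n + 1) u (f u)) ∧ T f b = M)
    (hTC : ∀ f : ℝ → Y, ContinuousOn f (Icc (x 0) b) → f (x 0) = y 0 → f b = M →
      ContinuousOn (T f) (Icc (x 0) b) ∧ T f (x 0) = y 0 ∧ T f b = M)
    :
    ∀ fs : ℝ → Y, ContinuousOn fs (Icc (x 0) b) → fs (x 0) = y 0 → fs b = M →
      EqOn (T fs) fs (Icc (x 0) b) →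
      ∀ f0 : ℝ → Y, ContinuousOn f0 (Icc (x 0) b) → f0 (x 0) = y 0 → f0 b = M →
        Tendsto (fun k : ℕ => ⨆ u : Icc (x 0) b, dist (T^[k] f0 u.1) (fs u.1))
          atTop (nhds 0) := by
  intro fs hfs hfsa hfsb hfix f0 hf0 hf0a hf0b
  have hiter : ∀ k : ℕ, ContinuousOn (T^[k] f0) (Icc (x 0) b) ∧ T^[k] f0 (x 0) = y 0 ∧
      T^[k] f0 b = M := by
    intro k
    induction k with
    | zero => exact ⟨hf0, hf0a, hf0b⟩
    | succ k ih =>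
      rw [Function.iterate_succ_apply']
      exact hTC _ ih.1 ih.2.1 ih.2.2
  have hbdd : ∀ k : ℕ, BddAbove (range fun u : Icc (x 0) b => dist (T^[k] f0 u.1) (fs u.1)) := by
    intro k
    refine ⟨Metric.diam (univ : Set Y), ?_⟩
    rintro _ ⟨u, rfl⟩
    exact Metric.dist_le_diam_of_mem isCompact_univ.isBounded (mem_univ _) (mem_univ _)
  have hnonneg : ∀ k : ℕ, 0 ≤ ⨆ u : Icc (x 0) b, dist (T^[k] f0 u.1) (fs u.1) :=
    fun k => Real.iSup_nonneg fun _ => dist_nonneg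
  refine tendsto_zero_of_le_comparison φ hφ0 hφmono hφlt hφanti _ hnonneg fun k => ?_
  refine Real.iSup_le ?_ (hφ0 _ (hnonneg k))
  rintro ⟨z, hz⟩
  obtain ⟨hc, ha, hb⟩ := hiter k
  rcases hz.2.eq_or_lt with hzb | hzb
  · have h1 : T^[k + 1] f0 z = fs z := by rw [hzb, (hiter (k + 1)).2.2, hfsb]
    simpa only [h1, dist_self] using hφ0 _ (hnonneg k)
  · obtain ⟨n, hn⟩ := exists_mem_Icc_succ x b hxb z hz.1 hzb
    rw [← hl_image n] at hn
    obtain ⟨u, hu, rfl⟩ := hn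
    have h2 : fs (l (n + 1) u) = W (n + 1) u (fs u) := by
      rw [← hfix hz, (hT fs hfs hfsa hfsb).1 n u hu]
    have h3 : T^[k + 1] f0 (l (n + 1) u) = W (n + 1) u (T^[k] f0 u) := by
      rw [Function.iterate_succ_apply', (hT _ hc ha hb).1 n u hu]
    have h4 := hWφ n u hu u hu (T^[k] f0 u) (fs u)
    rw [sub_self, abs_zero, mul_zero, zero_add] at h4
    simp only [h2, h3]
    exact h4.trans (hφmono _ _ dist_nonneg (le_ciSup (hbdd k) ⟨u, hu⟩))
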